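/- arXiv:1510.09127 — 3 statements merged into one kernel-verified Lean document; each statement's English description precedes it below -/
import Mathlib

section
/- Let M, n, m be positive natural numbers, T > 0, U ⊆ ℝ^m a compact set, and for each i ∈ {1,…,M} let f_i : ℝⁿ × ℝ^m → ℝⁿ and d_i : ℝⁿ → ℝ^{q_i} be continuous. Let u : [0,T] → U be measurable and let x : [0,T] → ℝⁿ be continuous, differentiable almost everywhere with (measurable) derivative ẋ. Then the following are equivalent: (a) for almost every t ∈ [0,T] there exists i ∈ {1,…,M} such that ẋ(t) = f_i(x(t), u(t)) and every component of d_i(x(t)) is ≤ 0; (b) there exists a measurable function ω : [0,T] → ℝ^M with ω(t) ∈ Σ_p^M for almost every t, such that for almost every t ∈ [0,T], ẋ(t) = Σ_{i=1}^M ω_i(t) f_i(x(t), u(t)) and for every i ∈ {1,…,M}, every component of ω_i(t)·d_i(x(t)) is ≤ 0. -/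
open MeasureTheory

/-!
A function with values in the corners of the simplex is the same thing as a choice of one mode at
each time, so the content beyond bookkeeping is that the mode can be chosen measurably. The times at
which a given mode is admissible form a null-measurable set: `x` is a.e. measurable because it is
continuous wherever it is differentiable, and its derivative is a.e. measurable because `deriv x` is
Borel. Up to a null set these sets are Borel, and the first admissible mode in an enumeration is
then a measurable function of time.
-/

/-- The corners of the standard simplex over `ι`; for `R = ℝ` and `ι = Fin M` this is `Σ_p^M`. -/
def simplexCorners (R ι : Type*) [Semiring R] [Fintype ι] : Set (ι → R) :=
  {w | ∑ i, w i = 1 ∧ ∀ i, w i = 0 ∨ w i = 1}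

section Corners

variable {R ι : Type*} [Semiring R] [Fintype ι] [DecidableEq ι]

lemma pi_single_mem_simplexCorners (i : ι) : Pi.single i 1 ∈ simplexCorners R ι := by
  refine ⟨Fintype.sum_pi_single' i 1, fun k => ?_⟩
  rcases eq_or_ne k i with rfl | hk
  · exact .inr (Pi.single_eq_same k 1)
  · exact .inl (Pi.single_eq_of_ne hk 1)

lemma exists_eq_pi_single_of_mem_simplexCorners [CharZero R] {w : ι → R}
    (hw : w ∈ simplexCorners R ι) : ∃ i, w = Pi.single i 1 := by
  classical
  obtain ⟨hsum, h01⟩ := hw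
  have hite (k : ι) : w k = if w k = 1 then 1 else 0 := by
    rcases h01 k with hk | hk <;> simp [hk]
  have hcard : (Finset.univ.filter fun k => w k = 1).card = 1 := by
    rw [Finset.sum_congr rfl fun k _ => hite k, Finset.sum_boole] at hsum
    exact_mod_cast hsum
  obtain ⟨i, hi⟩ := Finset.card_eq_one.1 hcard
  have hiff (k : ι) : w k = 1 ↔ k = i := by simpa using Finset.ext_iff.1 hi k
  refine ⟨i, funext fun k => ?_⟩
  rw [hite k, Pi.single_apply]
  simp only [hiff]

lemma eq_sum_pi_single_smul_and_nonpos_iff [Preorder R] {E : Type*} [AddCommMonoid E] [Module R E]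
    {κ : ι → Type*} (i : ι) (v : E) (a : ι → E) (b : ∀ k, κ k → R) :
    (v = ∑ k, Pi.single (M := fun _ => R) i 1 k • a k ∧
      ∀ k j, Pi.single (M := fun _ => R) i 1 k * b k j ≤ 0) ↔ v = a i ∧ ∀ j, b i j ≤ 0 := by
  have hsum : ∑ k, Pi.single (M := fun _ => R) i 1 k • a k = a i := by
    simp [Pi.single_apply]
  refine and_congr (by rw [hsum]) ⟨fun h j => by simpa using h i j, fun h k j => ?_⟩
  rcases eq_or_ne k i with rfl | hk
  · simpa using h j
  · simp [hk]

end Corners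

section Selection

variable {α ι : Type*} [MeasurableSpace α] [Countable ι] [Nonempty ι] [MeasurableSpace ι]
  {A : ι → Set α}

lemma exists_measurable_forall_mem_of_mem (hA : ∀ i, MeasurableSet (A i)) :
    ∃ σ : α → ι, Measurable σ ∧ ∀ i, ∀ t ∈ A i, t ∈ A (σ t) := by
  classical
  obtain ⟨e, he⟩ := exists_surjective_nat ι
  -- Off `⋃ i, A i` every index qualifies, which makes the search for the first one total.
  let p (t : α) (k : ℕ) : Prop := t ∈ A (e k) ∨ t ∉ ⋃ i, A i
  have hp (t : α) : ∃ k, p t k := by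
    by_cases ht : t ∈ ⋃ i, A i
    · obtain ⟨i, hi⟩ := Set.mem_iUnion.1 ht
      obtain ⟨k, rfl⟩ := he i
      exact ⟨k, .inl hi⟩
    · exact ⟨0, .inr ht⟩
  have hpm (k : ℕ) : MeasurableSet {t | p t k} := (hA (e k)).union (MeasurableSet.iUnion hA).compl
  refine ⟨fun t => e (Nat.find (hp t)), measurable_from_nat.comp (measurable_find hp hpm), ?_⟩
  exact fun i t ht => (Nat.find_spec (hp t)).resolve_right (not_not.2 (Set.mem_iUnion_of_mem i ht))

lemma exists_measurable_ae_mem {μ : Measure α} (hA : ∀ i, NullMeasurableSet (A i) μ)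
    (hcover : ∀ᵐ t ∂μ, ∃ i, t ∈ A i) :
    ∃ σ : α → ι, Measurable σ ∧ ∀ᵐ t ∂μ, t ∈ A (σ t) := by
  choose B hBA hB hBae using fun i => (hA i).exists_measurable_subset_ae_eq
  obtain ⟨σ, hσ, hmem⟩ := exists_measurable_forall_mem_of_mem hB
  refine ⟨σ, hσ, ?_⟩
  filter_upwards [hcover, ae_all_iff.2 fun i => (hBae i).mem_iff] with t ⟨i, hi⟩ hiff
  exact hBA _ (hmem i t ((hiff i).2 hi))

end Selection

section AEMeasurable

lemma aemeasurable_of_ae_continuousAt {X Y : Type*} [TopologicalSpace X] [MeasurableSpace X]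
    [OpensMeasurableSpace X] [TopologicalSpace Y] [TopologicalSpace.PseudoMetrizableSpace Y]
    [MeasurableSpace Y] [BorelSpace Y] {μ : Measure X} {g : X → Y}
    (hg : ∀ᵐ t ∂μ, ContinuousAt g t) : AEMeasurable g μ := by
  let _ := TopologicalSpace.pseudoMetrizableSpacePseudoMetric Y
  have hcont : ContinuousOn g {t | ContinuousAt g t} := fun _ ht => ht.continuousWithinAt
  have hmeas : MeasurableSet {t | ContinuousAt g t} := (IsGδ.setOfPred_continuousAt g).measurableSet
  rw [← Measure.restrict_eq_self_of_ae_mem (s := {t | ContinuousAt g t}) hg]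
  exact hcont.aemeasurable hmeas

lemma aemeasurable_of_ae_hasDerivAt {𝕜 E : Type*} [NontriviallyNormedField 𝕜]
    [LocallyCompactSpace 𝕜] [MeasurableSpace 𝕜] [OpensMeasurableSpace 𝕜] [NormedAddCommGroup E]
    [NormedSpace 𝕜 E] [CompleteSpace E] [MeasurableSpace E] [BorelSpace E] {μ : Measure 𝕜}
    {x x' : 𝕜 → E} (hx : ∀ᵐ t ∂μ, HasDerivAt x (x' t) t) : AEMeasurable x' μ :=
  (aemeasurable_deriv x μ).congr (hx.mono fun _ ht => ht.deriv)

lemma nullMeasurableSet_eq_and_forall_nonpos {α E κ : Type*} [MeasurableSpace α]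
    [MeasurableSpace E] [MeasurableEq E] [Countable κ] {μ : Measure α} {v w : α → E}
    {b : α → κ → ℝ} (hv : AEMeasurable v μ) (hw : AEMeasurable w μ) (hb : AEMeasurable b μ) :
    NullMeasurableSet {t | v t = w t ∧ ∀ j, b t j ≤ 0} μ := by
  have hle : NullMeasurableSet {t | ∀ j, b t j ≤ 0} μ := by
    rw [Set.ofPred_forall]
    exact .iInter fun j => nullMeasurableSet_le (aemeasurable_pi_iff.1 hb j) aemeasurable_const
  exact (nullMeasurableSet_eq_fun hv hw).inter hle

end AEMeasurable

section Relaxation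

variable {ι E : Type*} {κ : ι → Type*} [Fintype ι] [Nonempty ι] [∀ i, Countable (κ i)]
  [MeasurableSpace E]

theorem ae_exists_mode_iff_exists_measurable_simplexCorners [AddCommMonoid E] [Module ℝ E]
    [MeasurableEq E] {α : Type*} [MeasurableSpace α] {μ : Measure α}
    {v : α → E} {a : ι → α → E} {b : ∀ i, α → κ i → ℝ}
    (hv : AEMeasurable v μ) (ha : ∀ i, AEMeasurable (a i) μ) (hb : ∀ i, AEMeasurable (b i) μ) :
    (∀ᵐ t ∂μ, ∃ i, v t = a i t ∧ ∀ j, b i t j ≤ 0) ↔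
      ∃ ω : α → ι → ℝ, Measurable ω ∧ ∀ᵐ t ∂μ, ω t ∈ simplexCorners ℝ ι ∧
        v t = ∑ i, ω t i • a i t ∧ ∀ i j, ω t i * b i t j ≤ 0 := by
  classical
  constructor
  · intro h
    let _ : MeasurableSpace ι := ⊤
    obtain ⟨σ, hσ, hadm⟩ := exists_measurable_ae_mem
      (fun i => nullMeasurableSet_eq_and_forall_nonpos hv (ha i) (hb i)) h
    have hω : Measurable fun t => (Pi.single (σ t) 1 : ι → ℝ) :=
      (measurable_from_top (f := fun i => (Pi.single i 1 : ι → ℝ))).comp hσ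
    refine ⟨_, hω, ?_⟩
    filter_upwards [hadm] with t ht
    exact ⟨pi_single_mem_simplexCorners (σ t),
      (eq_sum_pi_single_smul_and_nonpos_iff (σ t) (v t) (a · t) (b · t)).2 ht⟩
  · rintro ⟨ω, -, h⟩
    filter_upwards [h] with t ⟨hcorner, hrelaxed⟩
    obtain ⟨i, hi⟩ := exists_eq_pi_single_of_mem_simplexCorners hcorner
    rw [hi] at hrelaxed
    exact ⟨i, (eq_sum_pi_single_smul_and_nonpos_iff i (v t) (a · t) (b · t)).1 hrelaxed⟩

theorem stmt0_general [NormedAddCommGroup E] [NormedSpace ℝ E] [CompleteSpace E]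
    [SecondCountableTopology E] [BorelSpace E] {F : Type*} [MeasurableSpace F] {μ : Measure ℝ}
    {f : ι → E → F → E} (hf : ∀ i, Measurable fun p : E × F => f i p.1 p.2)
    {d : ∀ i, E → κ i → ℝ} (hd : ∀ i, Measurable (d i))
    {u : ℝ → F} (hu : AEMeasurable u μ)
    {x x' : ℝ → E} (hdiff : ∀ᵐ t ∂μ, HasDerivAt x (x' t) t) :
    (∀ᵐ t ∂μ, ∃ i, x' t = f i (x t) (u t) ∧ ∀ j, d i (x t) j ≤ 0) ↔
      ∃ ω : ℝ → ι → ℝ, Measurable ω ∧ ∀ᵐ t ∂μ, ω t ∈ simplexCorners ℝ ι ∧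
        x' t = ∑ i, ω t i • f i (x t) (u t) ∧ ∀ i j, ω t i * d i (x t) j ≤ 0 := by
  have hx : AEMeasurable x μ :=
    aemeasurable_of_ae_continuousAt (hdiff.mono fun _ ht => ht.continuousAt)
  exact ae_exists_mode_iff_exists_measurable_simplexCorners (aemeasurable_of_ae_hasDerivAt hdiff)
    (fun i => (hf i).comp_aemeasurable (hx.prodMk hu)) fun i => (hd i).comp_aemeasurable hx

end Relaxation

/-- Proposition 1 of the paper. A pair `(x,u)` is a hybrid execution
(for a.e. `t` there is a mode `i` with `ẋ(t) = f_i(x(t),u(t))` and `d_i(x(t)) ≤ 0`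
componentwise) if and only if there is a measurable indexing function `ω` taking
values in the corners `Σ_p^M` of the `M`-simplex a.e. such that
`ẋ(t) = ∑ᵢ ωᵢ(t) fᵢ(x(t),u(t))` and `ωᵢ(t) dᵢ(x(t)) ≤ 0` componentwise, a.e. on `[0,T]`. -/
theorem stmt0 (M n m : ℕ) (hM : 0 < M) (hn : 0 < n) (hm : 0 < m)
    (T : ℝ) (hT : 0 < T)
    (U : Set (EuclideanSpace ℝ (Fin m))) (hU : IsCompact U)
    (q : Fin M → ℕ)
    (f : Fin M → EuclideanSpace ℝ (Fin n) → EuclideanSpace ℝ (Fin m) →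
      EuclideanSpace ℝ (Fin n))
    (hfc : ∀ i, Continuous fun p : EuclideanSpace ℝ (Fin n) × EuclideanSpace ℝ (Fin m) =>
      f i p.1 p.2)
    (d : (i : Fin M) → EuclideanSpace ℝ (Fin n) → EuclideanSpace ℝ (Fin (q i)))
    (hdc : ∀ i, Continuous (d i))
    (u : ℝ → EuclideanSpace ℝ (Fin m)) (hum : Measurable u)
    (huU : ∀ t ∈ Set.Icc (0:ℝ) T, u t ∈ U)
    (x : ℝ → EuclideanSpace ℝ (Fin n)) (hxc : ContinuousOn x (Set.Icc 0 T))
    (x' : ℝ → EuclideanSpace ℝ (Fin n)) (hx'm : Measurable x')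
    (hdiff : ∀ᵐ t ∂(volume.restrict (Set.Icc (0:ℝ) T)), HasDerivAt x (x' t) t) :
    (∀ᵐ t ∂(volume.restrict (Set.Icc (0:ℝ) T)), ∃ i : Fin M,
        x' t = f i (x t) (u t) ∧ ∀ j : Fin (q i), d i (x t) j ≤ 0) ↔
    (∃ ω : ℝ → Fin M → ℝ, Measurable ω ∧
      ∀ᵐ t ∂(volume.restrict (Set.Icc (0:ℝ) T)),
        (∑ i, ω t i = 1 ∧ ∀ i, ω t i = 0 ∨ ω t i = 1) ∧
        x' t = ∑ i, ω t i • f i (x t) (u t) ∧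
        ∀ (i : Fin M) (j : Fin (q i)), ω t i * d i (x t) j ≤ 0) := by
  have : Nonempty (Fin M) := Fin.pos_iff_nonempty.1 hM
  exact stmt0_general (fun i => (hfc i).measurable)
    (fun i => (WithLp.measurable_ofLp 2 _).comp (hdc i).measurable) hum.aemeasurable hdiff
end

section
/- Let M be a positive natural number, T > 0, N ∈ ℕ, and let η : [0,T] → ℝ^M satisfy η(t_k) ∈ Σ_r^M for every sample time t_k = kT/2^N, k ∈ {0,…,2^N−1}. Then for every t ∈ [0,T), the vector P_N(η)(t) belongs to Σ_p^M; that is, there is exactly one i ∈ {1,…,M} with [P_N(η)]_i(t) = 1, and [P_N(η)]_j(t) = 0 for all j ≠ i. -/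
/-- Partial sums `S_{k,i} = (T/2^N) (k + ∑_{j=1}^{i} η_j(kT/2^N))` used in the
pulse-width modulation operator (here `i : ℕ` counts how many coordinates are summed,
coordinates being indexed by `Fin M`). -/
noncomputable def pwmPartial (M : ℕ) (T : ℝ) (N : ℕ) (η : ℝ → Fin M → ℝ)
    (k i : ℕ) : ℝ :=
  (T / 2 ^ N) *
    (k + ∑ j ∈ Finset.univ.filter (fun j : Fin M => (j : ℕ) < i), η (k * T / 2 ^ N) j)

/-- The pulse-width modulation operator: `[P_N(η)]_i(t) = 1` iff
`t ∈ [S_{k,i-1}, S_{k,i})` for some `k ∈ {0,…,2^N-1}` (with `i : Fin M` zero-based,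
so the pulse for coordinate `i` is `[S_{k,i}, S_{k,i+1})` in zero-based partial sums). -/
noncomputable def pwm (M : ℕ) (T : ℝ) (N : ℕ) (η : ℝ → Fin M → ℝ)
    (t : ℝ) (i : Fin M) : ℝ :=
  if ∃ k : ℕ, k < 2 ^ N ∧
      t ∈ Set.Ico (pwmPartial M T N η k i) (pwmPartial M T N η k (i + 1)) then 1 else 0

/-!
A monotone sequence `f 0 ≤ f 1 ≤ ⋯ ≤ f n` cuts `[f 0, f n)` into the pieces `[f i, f (i + 1))`,
exactly one of which contains a given point. Apply this twice: to the sample times, which cut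
`[0, T)` into sampling intervals, and then, within the `k`-th sampling interval, to the partial sums
`S_{k,0} ≤ ⋯ ≤ S_{k,M}`, which run from one sample time to the next because the entries of `η` at
the sample time are nonnegative and sum to one.
-/

open Set

section MonotoneSequence

variable {α : Type*} [LinearOrder α] {f : ℕ → α} {n : ℕ} {x : α}

theorem exists_fin_mem_Ico_succ (hx : x ∈ Ico (f 0) (f n)) :
    ∃ i : Fin n, x ∈ Ico (f i) (f (i + 1)) := by
  induction n with
  | zero => simp at hx
  | succ n ih =>
    rcases lt_or_ge x (f n) with hlt | hge
    · obtain ⟨i, hi⟩ := ih ⟨hx.1, hlt⟩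
      exact ⟨i.castSucc, hi⟩
    · exact ⟨Fin.last n, hge, hx.2⟩

theorem existsUnique_fin_mem_Ico_succ (hf : Monotone f) (hx : x ∈ Ico (f 0) (f n)) :
    ∃! i : Fin n, x ∈ Ico (f i) (f (i + 1)) := by
  refine existsUnique_of_exists_of_unique (exists_fin_mem_Ico_succ hx) fun i j hi hj => ?_
  exact Fin.ext (hf.pairwise_disjoint_on_Ico_succ.eq (not_disjoint_iff.mpr ⟨x, hi, hj⟩))

end MonotoneSequence

/-- The pulse `[S_{k,i}, S_{k,i+1})` of the `k`-th sampling interval, on which the zero-based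
coordinate `i` of `P_N(η)` is switched on. -/
def pwmPulse (M : ℕ) (T : ℝ) (N : ℕ) (η : ℝ → Fin M → ℝ) (k i : ℕ) : Set ℝ :=
  Ico (pwmPartial M T N η k i) (pwmPartial M T N η k (i + 1))

section Pulse

variable {M : ℕ} {T : ℝ} {N : ℕ} {η : ℝ → Fin M → ℝ} {k : ℕ} {t : ℝ}

theorem monotone_sampleTime (hT : 0 ≤ T) (N : ℕ) :
    Monotone fun k : ℕ => (k : ℝ) * T / 2 ^ N := by
  intro k l hkl
  dsimp only
  gcongr

theorem pwmPartial_zero : pwmPartial M T N η k 0 = k * T / 2 ^ N := by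
  simp only [pwmPartial, Nat.not_lt_zero, Finset.filter_false, Finset.sum_empty]
  ring

theorem pwmPartial_self (hsum : ∑ i, η (k * T / 2 ^ N) i = 1) :
    pwmPartial M T N η k M = (k + 1 : ℕ) * T / 2 ^ N := by
  simp only [pwmPartial, Fin.is_lt, Finset.filter_true, hsum]
  push_cast
  ring

theorem monotone_pwmPartial (hT : 0 ≤ T) (hnonneg : ∀ i, 0 ≤ η (k * T / 2 ^ N) i) :
    Monotone (pwmPartial M T N η k) := by
  intro i j hij
  unfold pwmPartial
  gcongr
  exact fun l _ _ => hnonneg l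

theorem pwmPulse_subset_sampleInterval (hT : 0 ≤ T)
    (hη : η (k * T / 2 ^ N) ∈ stdSimplex ℝ (Fin M)) (i : Fin M) :
    pwmPulse M T N η k i ⊆ Ico (k * T / 2 ^ N) ((k + 1 : ℕ) * T / 2 ^ N) := by
  have hmono := monotone_pwmPartial hT hη.1
  rw [← pwmPartial_zero (η := η), ← pwmPartial_self hη.2]
  exact Ico_subset_Ico (hmono (Nat.zero_le i)) (hmono i.is_lt)

theorem existsUnique_mem_pwmPulse (hT : 0 ≤ T)
    (hη : η (k * T / 2 ^ N) ∈ stdSimplex ℝ (Fin M))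
    (ht : t ∈ Ico (k * T / 2 ^ N) ((k + 1 : ℕ) * T / 2 ^ N)) :
    ∃! i : Fin M, t ∈ pwmPulse M T N η k i := by
  rw [← pwmPartial_zero (η := η), ← pwmPartial_self hη.2] at ht
  exact existsUnique_fin_mem_Ico_succ (monotone_pwmPartial hT hη.1) ht

theorem existsUnique_mem_sampleInterval (N : ℕ) (ht : t ∈ Ico 0 T) :
    ∃! k : Fin (2 ^ N), t ∈ Ico (k * T / 2 ^ N) ((k + 1 : ℕ) * T / 2 ^ N) := by
  refine existsUnique_fin_mem_Ico_succ (monotone_sampleTime (ht.1.trans ht.2.le) N) ?_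
  simpa using ht

theorem existsUnique_exists_mem_pwmPulse
    (hη : ∀ k : ℕ, k < 2 ^ N → η (k * T / 2 ^ N) ∈ stdSimplex ℝ (Fin M)) (ht : t ∈ Ico 0 T) :
    ∃! i : Fin M, ∃ k < 2 ^ N, t ∈ pwmPulse M T N η k i := by
  have hT : 0 ≤ T := ht.1.trans ht.2.le
  obtain ⟨k, htk, hk_unique⟩ := existsUnique_mem_sampleInterval N ht
  obtain ⟨i, hti, hi_unique⟩ := existsUnique_mem_pwmPulse hT (hη k k.is_lt) htk
  refine ⟨i, ⟨k, k.is_lt, hti⟩, ?_⟩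
  rintro j ⟨l, hl, htj⟩
  obtain rfl : ⟨l, hl⟩ = k :=
    hk_unique ⟨l, hl⟩ (pwmPulse_subset_sampleInterval hT (hη l hl) j htj)
  exact hi_unique j htj

theorem exists_pwm_eq_single
    (hη : ∀ k : ℕ, k < 2 ^ N → η (k * T / 2 ^ N) ∈ stdSimplex ℝ (Fin M)) (ht : t ∈ Ico 0 T) :
    ∃ i, pwm M T N η t = Pi.single i 1 := by
  obtain ⟨i, hi, hi_unique⟩ := existsUnique_exists_mem_pwmPulse hη ht
  refine ⟨i, funext fun j => ?_⟩
  rcases eq_or_ne j i with rfl | hji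
  · rw [Pi.single_eq_same]
    exact if_pos hi
  · rw [Pi.single_eq_of_ne hji]
    exact if_neg fun hj => hji (hi_unique j hj)

end Pulse

/-- If `η` takes values in the simplex `Σ_r^M` at every sample time
`kT/2^N`, then for every `t ∈ [0,T)` the vector `P_N(η)(t)` lies in the set of corners
`Σ_p^M`; in particular there is exactly one coordinate `i` with `[P_N(η)]_i(t) = 1`,
and all other coordinates vanish. -/
theorem stmt5 (M : ℕ) (hM : 0 < M) (T : ℝ) (hT : 0 < T) (N : ℕ)
    (η : ℝ → Fin M → ℝ)
    (hη : ∀ k : ℕ, k < 2 ^ N →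
      ∑ i, η (k * T / 2 ^ N) i = 1 ∧ ∀ i, η (k * T / 2 ^ N) i ∈ Set.Icc (0:ℝ) 1) :
    ∀ t ∈ Set.Ico (0:ℝ) T,
      (∑ i, pwm M T N η t i = 1 ∧ ∀ i, pwm M T N η t i = 0 ∨ pwm M T N η t i = 1) ∧
      ∃! i : Fin M, pwm M T N η t i = 1 ∧ ∀ j, j ≠ i → pwm M T N η t j = 0 := by
  intro t ht
  have hsimplex : ∀ k : ℕ, k < 2 ^ N → η (k * T / 2 ^ N) ∈ stdSimplex ℝ (Fin M) :=
    fun k hk => ⟨fun i => ((hη k hk).2 i).1, (hη k hk).1⟩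
  obtain ⟨i, hi⟩ := exists_pwm_eq_single hsimplex ht
  rw [hi]
  refine ⟨⟨(single_mem_stdSimplex ℝ i).2, fun j => ?_⟩, i, ?_, ?_⟩
  · rcases eq_or_ne j i with rfl | hji
    · exact .inr (Pi.single_eq_same j 1)
    · exact .inl (Pi.single_eq_of_ne hji 1)
  · exact ⟨Pi.single_eq_same i 1, fun j hji => Pi.single_eq_of_ne hji 1⟩
  · rintro j ⟨hj, -⟩
    by_contra hji
    exact zero_ne_one ((Pi.single_eq_of_ne hji 1).symm.trans hj)
end

section
/- Let T > 0, N ∈ ℕ, and let g : [0,T] → ℝ be integrable. Then for every j ∈ {0,…,2^{N+1}−1} and every t ∈ [jT/2^{N+1}, (j+1)T/2^{N+1}), F_N(g)(t) = (2^{N+1}/T) · ∫_{jT/2^{N+1}}^{(j+1)T/2^{N+1}} g(s) ds. In particular, F_N(g) is constant on each interval of the uniform dyadic partition of [0,T] into 2^{N+1} pieces, and equals the average of g on that interval. -/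
/-- The mother Haar function on `[0,T]`: `1` on `[0,T/2)`, `-1` on `[T/2,T)`, `0` otherwise. -/
noncomputable def haarMother (T t : ℝ) : ℝ :=
  if 0 ≤ t ∧ t < T / 2 then 1 else if T / 2 ≤ t ∧ t < T then -1 else 0

/-- The Haar function `b_{k,j}(t) = b_{0,0}(2^k t - j T)` on `[0,T]`. -/
noncomputable def haarFn (T : ℝ) (k j : ℕ) (t : ℝ) : ℝ :=
  haarMother T (2 ^ k * t - j * T)

/-- The Haar wavelet operator
`F_N(g)(t) = (1/T) ∫₀ᵀ g + ∑_{k=0}^{N} ∑_{j=0}^{2^k-1} (2^k/T) (∫₀ᵀ g b_{k,j}) b_{k,j}(t)`. -/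
noncomputable def haarOp (T : ℝ) (N : ℕ) (g : ℝ → ℝ) (t : ℝ) : ℝ :=
  (1 / T) * (∫ s in (0:ℝ)..T, g s) +
    ∑ k ∈ Finset.range (N + 1), ∑ j ∈ Finset.range (2 ^ k),
      (2 ^ k / T) * (∫ s in (0:ℝ)..T, g s * haarFn T k j s) * haarFn T k j t

/-!
The dyadic interval `I` of level `k` with index `i` splits into two halves `L` and `R` of level
`k + 1`, and `b_{k,i}` is the difference of their indicators. Hence at a point of `I` the detail of
`g` at level `k` is `± 2 ^ k / T * (∫_L g - ∫_R g)`, with sign `+` on `L` and `-` on `R`. Adding it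
to the average `2 ^ k / T * (∫_L g + ∫_R g)` over `I` gives the average over the half that contains
the point, so by induction on the number of levels the partial sums are the dyadic averages.
-/

section DyadicAverages

open MeasureTheory Set

/-- The `j`-th half-open interval `[jT/2^k, (j+1)T/2^k)` of the uniform dyadic partition of `[0,T)`
into `2^k` pieces. It is defined for all `j`, and lies in `[0,T)` when `j < 2^k`. -/
def dyadicInterval (T : ℝ) (k j : ℕ) : Set ℝ :=
  Ico (j * T / 2 ^ k) ((j + 1) * T / 2 ^ k)

/-- The detail of `g` at scale `k`: the part of its Haar expansion spanned by the functions
`b_{k,j}` with `j < 2^k`. -/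
noncomputable def haarDetail (T : ℝ) (k : ℕ) (g : ℝ → ℝ) (t : ℝ) : ℝ :=
  ∑ j ∈ Finset.range (2 ^ k),
    (2 ^ k / T) * (∫ s in (0 : ℝ)..T, g s * haarFn T k j s) * haarFn T k j t

/-- The mean of `g` plus its details at the `M` scales `k < M`, so that `F_N` is the partial sum
with `M = N + 1`; unlike `haarOp`, it includes the mean alone, as the case `M = 0`. -/
noncomputable def haarPartialSum (T : ℝ) (M : ℕ) (g : ℝ → ℝ) (t : ℝ) : ℝ :=
  (1 / T) * (∫ s in (0 : ℝ)..T, g s) + ∑ k ∈ Finset.range M, haarDetail T k g t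

variable {T t : ℝ} {g : ℝ → ℝ} {i j k : ℕ}

lemma mem_dyadicInterval :
    t ∈ dyadicInterval T k j ↔ j * T ≤ 2 ^ k * t ∧ 2 ^ k * t < (j + 1) * T := by
  rw [dyadicInterval, mem_Ico, div_le_iff₀' (by positivity), lt_div_iff₀' (by positivity)]

lemma mem_dyadicInterval_left_half :
    t ∈ dyadicInterval T (k + 1) (2 * j) ↔
      j * T ≤ 2 ^ k * t ∧ 2 ^ k * t < j * T + T / 2 := by
  rw [mem_dyadicInterval, pow_succ]
  push_cast
  constructor <;> rintro ⟨_, _⟩ <;> constructor <;> linarith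

lemma mem_dyadicInterval_right_half :
    t ∈ dyadicInterval T (k + 1) (2 * j + 1) ↔
      j * T + T / 2 ≤ 2 ^ k * t ∧ 2 ^ k * t < (j + 1) * T := by
  rw [mem_dyadicInterval, pow_succ]
  push_cast
  constructor <;> rintro ⟨_, _⟩ <;> constructor <;> linarith

lemma measurableSet_dyadicInterval : MeasurableSet (dyadicInterval T k j) :=
  measurableSet_Ico

lemma pos_of_mem_dyadicInterval (ht : t ∈ dyadicInterval T k j) : 0 < T := by
  rw [mem_dyadicInterval] at ht
  linarith

lemma eq_of_mem_dyadicInterval (hi : t ∈ dyadicInterval T k i) (hj : t ∈ dyadicInterval T k j) :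
    i = j := by
  have hT : 0 < T := pos_of_mem_dyadicInterval hi
  rw [mem_dyadicInterval] at hi hj
  have hij : (i : ℝ) < j + 1 := lt_of_mul_lt_mul_right (hi.1.trans_lt hj.2) hT.le
  have hji : (j : ℝ) < i + 1 := lt_of_mul_lt_mul_right (hj.1.trans_lt hi.2) hT.le
  norm_cast at hij hji
  lia

lemma pairwise_disjoint_dyadicInterval (T : ℝ) (k : ℕ) :
    Pairwise (Function.onFun Disjoint (dyadicInterval T k)) :=
  fun _ _ hij => disjoint_left.2 fun _ hi hj => hij (eq_of_mem_dyadicInterval hi hj)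

lemma dyadicInterval_eq_union_halves (T : ℝ) (k j : ℕ) :
    dyadicInterval T k j =
      dyadicInterval T (k + 1) (2 * j) ∪ dyadicInterval T (k + 1) (2 * j + 1) := by
  ext t
  rw [mem_union, mem_dyadicInterval, mem_dyadicInterval_left_half, mem_dyadicInterval_right_half]
  constructor
  · rintro ⟨hle, hlt⟩
    rcases lt_or_ge (2 ^ k * t) (j * T + T / 2) with h | h
    · exact .inl ⟨hle, h⟩
    · exact .inr ⟨h, hlt⟩
  · rintro (⟨_, _⟩ | ⟨_, _⟩) <;> constructor <;> linarith

lemma disjoint_dyadicInterval_halves (T : ℝ) (k j : ℕ) :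
    Disjoint (dyadicInterval T (k + 1) (2 * j)) (dyadicInterval T (k + 1) (2 * j + 1)) :=
  pairwise_disjoint_dyadicInterval T (k + 1) (Nat.succ_ne_self _).symm

lemma dyadicInterval_subset_Ico (hj : j < 2 ^ k) : dyadicInterval T k j ⊆ Ico 0 T := by
  intro t ht
  have hT : 0 < T := pos_of_mem_dyadicInterval ht
  rw [mem_dyadicInterval] at ht
  have hj' : (j : ℝ) + 1 ≤ 2 ^ k := by exact_mod_cast hj
  have h_nonneg : 0 ≤ 2 ^ k * t := le_trans (by positivity) ht.1
  have h_lt : 2 ^ k * t < 2 ^ k * T := ht.2.trans_le (by gcongr)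
  exact ⟨nonneg_of_mul_nonneg_right h_nonneg (by positivity),
    lt_of_mul_lt_mul_left h_lt (by positivity)⟩

lemma intervalIntegral_eq_setIntegral_Ico {E : Type*} [NormedAddCommGroup E] [NormedSpace ℝ E]
    {μ : Measure ℝ} [NullSingletonClass μ] {f : ℝ → E} {a b : ℝ} (hab : a ≤ b) :
    ∫ s in a..b, f s ∂μ = ∫ s in Ico a b, f s ∂μ := by
  rw [intervalIntegral.integral_of_le hab, integral_Ico_eq_integral_Ioc]

lemma setIntegral_dyadicInterval_eq_add_halves (hg : IntegrableOn g (dyadicInterval T k j)) :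
    ∫ s in dyadicInterval T k j, g s =
      (∫ s in dyadicInterval T (k + 1) (2 * j), g s) +
        ∫ s in dyadicInterval T (k + 1) (2 * j + 1), g s := by
  rw [dyadicInterval_eq_union_halves] at hg ⊢
  exact setIntegral_union (disjoint_dyadicInterval_halves T k j) measurableSet_dyadicInterval
    hg.left_of_union hg.right_of_union

lemma haarFn_eq_one (ht : t ∈ dyadicInterval T (k + 1) (2 * j)) : haarFn T k j t = 1 := by
  rw [mem_dyadicInterval_left_half] at ht
  exact if_pos ⟨by linarith, by linarith⟩

lemma haarFn_eq_neg_one (ht : t ∈ dyadicInterval T (k + 1) (2 * j + 1)) :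
    haarFn T k j t = -1 := by
  rw [mem_dyadicInterval_right_half] at ht
  rw [haarFn, haarMother, if_neg (by rintro ⟨_, _⟩; linarith), if_pos ⟨by linarith, by linarith⟩]

lemma haarFn_eq_zero (ht : t ∉ dyadicInterval T k j) : haarFn T k j t = 0 := by
  rw [mem_dyadicInterval] at ht
  rw [haarFn, haarMother, if_neg, if_neg] <;> rintro ⟨_, _⟩ <;>
    exact ht ⟨by linarith, by linarith⟩

lemma mul_haarFn_eq_indicator_sub_indicator (T : ℝ) (k j : ℕ) (g : ℝ → ℝ) (t : ℝ) :
    g t * haarFn T k j t =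
      (dyadicInterval T (k + 1) (2 * j)).indicator g t -
        (dyadicInterval T (k + 1) (2 * j + 1)).indicator g t := by
  by_cases hl : t ∈ dyadicInterval T (k + 1) (2 * j)
  · have hr := disjoint_left.1 (disjoint_dyadicInterval_halves T k j) hl
    simp [haarFn_eq_one hl, hl, hr]
  by_cases hr : t ∈ dyadicInterval T (k + 1) (2 * j + 1)
  · simp [haarFn_eq_neg_one hr, hl, hr]
  · have ht : t ∉ dyadicInterval T k j := by
      rw [dyadicInterval_eq_union_halves]
      exact fun h => h.elim hl hr
    simp [haarFn_eq_zero ht, hl, hr]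

lemma integral_mul_haarFn (hT : 0 ≤ T) (hg : IntegrableOn g (Ico 0 T)) (hj : j < 2 ^ k) :
    ∫ s in (0 : ℝ)..T, g s * haarFn T k j s =
      (∫ s in dyadicInterval T (k + 1) (2 * j), g s) -
        ∫ s in dyadicInterval T (k + 1) (2 * j + 1), g s := by
  have hl : dyadicInterval T (k + 1) (2 * j) ⊆ Ico 0 T :=
    dyadicInterval_subset_Ico (by rw [pow_succ]; lia)
  have hr : dyadicInterval T (k + 1) (2 * j + 1) ⊆ Ico 0 T :=
    dyadicInterval_subset_Ico (by rw [pow_succ]; lia)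
  simp_rw [mul_haarFn_eq_indicator_sub_indicator]
  rw [intervalIntegral_eq_setIntegral_Ico hT,
    integral_sub (hg.indicator measurableSet_dyadicInterval)
      (hg.indicator measurableSet_dyadicInterval),
    setIntegral_indicator measurableSet_dyadicInterval,
    setIntegral_indicator measurableSet_dyadicInterval,
    inter_eq_right.2 hl, inter_eq_right.2 hr]

lemma haarDetail_eq_of_mem (hg : IntegrableOn g (Ico 0 T)) (hi : i < 2 ^ k)
    (ht : t ∈ dyadicInterval T k i) :
    haarDetail T k g t =
      (2 ^ k / T) * ((∫ s in dyadicInterval T (k + 1) (2 * i), g s) -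
        ∫ s in dyadicInterval T (k + 1) (2 * i + 1), g s) * haarFn T k i t := by
  have h_other : ∀ l ≠ i, haarFn T k l t = 0 := fun l hl =>
    haarFn_eq_zero fun htl => hl (eq_of_mem_dyadicInterval htl ht)
  rw [haarDetail, Finset.sum_eq_single_of_mem i (Finset.mem_range.2 hi)
      fun l _ hl => by rw [h_other l hl, mul_zero],
    integral_mul_haarFn (pos_of_mem_dyadicInterval ht).le hg hi]

lemma haarOp_eq_haarPartialSum (T : ℝ) (N : ℕ) (g : ℝ → ℝ) (t : ℝ) :
    haarOp T N g t = haarPartialSum T (N + 1) g t :=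
  rfl

lemma haarPartialSum_succ (T : ℝ) (M : ℕ) (g : ℝ → ℝ) (t : ℝ) :
    haarPartialSum T (M + 1) g t = haarPartialSum T M g t + haarDetail T M g t := by
  rw [haarPartialSum, haarPartialSum, Finset.sum_range_succ, add_assoc]

theorem haarPartialSum_eq_average {M : ℕ} (hg : IntegrableOn g (Ico 0 T)) (hj : j < 2 ^ M)
    (ht : t ∈ dyadicInterval T M j) :
    haarPartialSum T M g t = (2 ^ M / T) * ∫ s in dyadicInterval T M j, g s := by
  induction M generalizing j with
  | zero =>
    obtain rfl : j = 0 := by simpa using hj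
    simp [haarPartialSum, dyadicInterval,
      intervalIntegral_eq_setIntegral_Ico (pos_of_mem_dyadicInterval ht).le]
  | succ M ih =>
    obtain ⟨i, hij⟩ : ∃ i, j = 2 * i ∨ j = 2 * i + 1 := ⟨j / 2, by lia⟩
    have hi : i < 2 ^ M := by rw [pow_succ] at hj; lia
    have hti : t ∈ dyadicInterval T M i := by
      rw [dyadicInterval_eq_union_halves]
      rcases hij with rfl | rfl
      exacts [.inl ht, .inr ht]
    have h_split := setIntegral_dyadicInterval_eq_add_halves
      (hg.mono_set (dyadicInterval_subset_Ico hi))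
    rw [haarPartialSum_succ, ih hi hti, haarDetail_eq_of_mem hg hi hti, h_split]
    rcases hij with rfl | rfl
    · rw [haarFn_eq_one ht]
      ring
    · rw [haarFn_eq_neg_one ht]
      ring

end DyadicAverages

/-- `F_N(g)` is piecewise constant on the uniform dyadic partition of `[0,T]`
into `2^{N+1}` pieces, and on each such interval it equals the average of `g` there. -/
theorem stmt7 (T : ℝ) (hT : 0 < T) (N : ℕ) (g : ℝ → ℝ)
    (hg : MeasureTheory.IntegrableOn g (Set.Icc 0 T)) :
    ∀ j : ℕ, j < 2 ^ (N + 1) →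
      ∀ t ∈ Set.Ico (j * T / 2 ^ (N + 1)) ((j + 1) * T / 2 ^ (N + 1)),
        haarOp T N g t
          = (2 ^ (N + 1) / T) *
              ∫ s in (j * T / 2 ^ (N + 1))..((j + 1) * T / 2 ^ (N + 1)), g s := by
  intro j hj t ht
  have h_endpoints : j * T / 2 ^ (N + 1) ≤ (j + 1) * T / 2 ^ (N + 1) := ht.1.trans ht.2.le
  rw [haarOp_eq_haarPartialSum, intervalIntegral_eq_setIntegral_Ico h_endpoints]
  exact haarPartialSum_eq_average (hg.mono_set Set.Ico_subset_Icc_self) hj ht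
end
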